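/- If f(z) = Σ_{n≥0} a_n z^n is analytic on the unit disk with |f(z)| ≤ 1, then for 0 ≤ r < 1: Σ_{n≥1} |a_n| r^n ≤ r(1 − |a_0|^2)/(1 − r|a_0|) when |a_0| ≥ r, and Σ_{n≥1} |a_n| r^n ≤ r √(1 − |a_0|^2)/√(1 − r^2) when |a_0| < r. -/

import Mathlib

/-!
The proof rests on a weighted `ℓ²` bound: for `0 ≤ ρ ≤ 1`,
`(1 - ρ |a₀|²) ∑_{n ≥ 1} |aₙ|² ρⁿ ≤ ρ (1 - |a₀|²)²` (`weighted_sq_sum_le`).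

To obtain it, put `h = f - a₀`. The Schwarz–Pick inequality `|f - a₀| ≤ |z| |1 - ā₀ f|`
(`schwarz_pick`) reads `|h| ≤ s |(1 - |a₀|²) - ā₀ h|` on the circle `|z| = s = √ρ`. There `h` is
orthogonal to the constants in `L²`, so Pythagoras gives
`‖h‖² ≤ ρ ((1 - |a₀|²)² + |a₀|² ‖h‖²)`, and Bessel's inequality bounds the coefficient sum by `‖h‖²`.
The value `ρ = 1` is reached by continuity of the finite sums.

Cauchy–Schwarz with the weights `ρⁿ` and `(r² / ρ)ⁿ` (`sq_sum_le`) then gives both estimates: take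
`ρ = r / |a₀|` when `r ≤ |a₀|`, and `ρ = 1` when `|a₀| < r`.
-/

open Filter Topology MeasureTheory ComplexConjugate

/-- A function given by a power series on the unit disk is holomorphic there. -/
lemma differentiableOn_of_hasSum (f : ℂ → ℂ) (a : ℕ → ℂ)
    (hf : ∀ z : ℂ, ‖z‖ < 1 → HasSum (fun n => a n * z ^ n) (f z)) :
    DifferentiableOn ℂ f (Metric.ball 0 1) := by
  have h : HasFPowerSeriesOnBall f (FormalMultilinearSeries.ofScalars ℂ a) 0 1 := by
    refine ⟨?_, one_pos, ?_⟩
    · refine ENNReal.le_of_forall_nnreal_lt fun t ht => ?_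
      have ht' : (t : ℝ) < 1 := by exact_mod_cast ht
      refine FormalMultilinearSeries.le_radius_of_summable_norm _ ?_
      have := (hf (t : ℝ) (by simpa using ht')).summable.norm
      simpa [FormalMultilinearSeries.ofScalars_norm] using this
    · intro y hy
      have hy' : ‖y‖ < 1 := by
        rw [Metric.mem_eball, edist_zero_right, ← ofReal_norm] at hy
        exact ENNReal.ofReal_lt_one.1 hy
      simpa [FormalMultilinearSeries.ofScalars_apply_eq, smul_eq_mul, mul_comm] using hf y hy'
  have := h.differentiableOn
  rwa [← ENNReal.ofReal_one, Metric.eball_ofReal] at this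

lemma one_sub_conj_mul_ne_zero {u w : ℂ} (hu : ‖u‖ < 1) (hw : ‖w‖ < 1) :
    1 - conj u * w ≠ 0 := by
  intro h
  have h1 : ‖conj u * w‖ = 1 := by rw [← sub_eq_zero.mp h, norm_one]
  rw [norm_mul, RCLike.norm_conj] at h1
  nlinarith [norm_nonneg u, norm_nonneg w]

lemma norm_sub_le_norm_one_sub_conj_mul {u w : ℂ} (hu : ‖u‖ < 1) (hw : ‖w‖ < 1) :
    ‖w - u‖ ≤ ‖1 - conj u * w‖ := by
  have key : ‖1 - conj u * w‖ ^ 2 - ‖w - u‖ ^ 2 = (1 - ‖u‖ ^ 2) * (1 - ‖w‖ ^ 2) := by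
    simp only [← Complex.normSq_eq_norm_sq, Complex.normSq_apply, Complex.sub_re, Complex.sub_im,
      Complex.mul_re, Complex.mul_im, Complex.conj_re, Complex.conj_im, Complex.one_re,
      Complex.one_im]
    ring
  have h1 : 0 ≤ (1 - ‖u‖ ^ 2) * (1 - ‖w‖ ^ 2) :=
    mul_nonneg (by nlinarith [norm_nonneg u]) (by nlinarith [norm_nonneg w])
  exact le_of_sq_le_sq (by linarith) (norm_nonneg _)

lemma schwarz_pick_of_lt {f : ℂ → ℂ} (hd : DifferentiableOn ℂ f (Metric.ball 0 1))
    (hb : ∀ z : ℂ, ‖z‖ < 1 → ‖f z‖ < 1) {z : ℂ} (hz : ‖z‖ < 1) :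
    ‖f z - f 0‖ ≤ ‖z‖ * ‖1 - conj (f 0) * f z‖ := by
  have h0 : ‖f 0‖ < 1 := hb 0 (by simp)
  have hne : ∀ w : ℂ, ‖w‖ < 1 → 1 - conj (f 0) * f w ≠ 0 := fun w hw =>
    one_sub_conj_mul_ne_zero h0 (hb w hw)
  have hs := Complex.norm_le_norm_of_mapsTo_ball (R := 1)
    (f := fun w => (f w - f 0) / (1 - conj (f 0) * f w))
    (((hd.sub_const _)).div ((hd.const_mul _).const_sub _) fun w hw => hne w (by simpa using hw))
    (fun w hw => by
      have hw' : ‖w‖ < 1 := by simpa using hw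
      rw [mem_closedBall_zero_iff, norm_div]
      exact div_le_one_of_le₀ (norm_sub_le_norm_one_sub_conj_mul h0 (hb w hw')) (norm_nonneg _))
    (by simp) hz
  rwa [norm_div, div_le_iff₀ (norm_pos_iff.2 (hne z hz))] at hs

/-- The **Schwarz–Pick inequality** in a division-free form, which also covers `‖f 0‖ = 1`. -/
lemma schwarz_pick {f : ℂ → ℂ} (hd : DifferentiableOn ℂ f (Metric.ball 0 1))
    (hb : ∀ z : ℂ, ‖z‖ < 1 → ‖f z‖ ≤ 1) {z : ℂ} (hz : ‖z‖ < 1) :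
    ‖f z - f 0‖ ≤ ‖z‖ * ‖1 - conj (f 0) * f z‖ := by
  -- Apply the strict case to `t * f` and let `t` increase to `1`.
  have h : ∀ t ∈ Set.Ioo (0 : ℝ) 1,
      ‖t * f z - t * f 0‖ ≤ ‖z‖ * ‖1 - conj (t * f 0) * (t * f z)‖ := by
    intro t ht
    refine schwarz_pick_of_lt (f := fun w => t * f w) (hd.const_mul _) (fun w hw => ?_) hz
    rw [norm_mul, Complex.norm_real, Real.norm_of_nonneg ht.1.le]
    nlinarith [hb w hw, norm_nonneg (f w), ht.1, ht.2]
  have h1 : (1 : ℝ) ∈ closure (Set.Ioo (0 : ℝ) 1) := by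
    rw [closure_Ioo zero_ne_one]; simp
  have := closure_minimal (s := Set.Ioo (0 : ℝ) 1)
    (t := {t : ℝ | ‖t * f z - t * f 0‖ ≤ ‖z‖ * ‖1 - conj (t * f 0) * (t * f z)‖}) h
    (isClosed_le (by fun_prop) (by fun_prop)) h1
  simpa using this

/-- The weighted `ℓ²` bound for `ρ = s ^ 2 < 1`, from Schwarz–Pick and Bessel's inequality on the
circle of radius `s`. -/
lemma weighted_sq_sum_le_of_lt (f : ℂ → ℂ) (a : ℕ → ℂ)
    (hf : ∀ z : ℂ, ‖z‖ < 1 → HasSum (fun n => a n * z ^ n) (f z))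
    (hbd : ∀ z : ℂ, ‖z‖ < 1 → ‖f z‖ ≤ 1) (ha : ‖a 0‖ ≤ 1) (hfa : f 0 = a 0)
    {s : ℝ} (hs0 : 0 ≤ s) (hs : s < 1) (N : ℕ) :
    (∑ n ∈ Finset.range N, ‖a (n + 1)‖ ^ 2 * (s ^ 2) ^ (n + 1)) * (1 - s ^ 2 * ‖a 0‖ ^ 2)
      ≤ s ^ 2 * (1 - ‖a 0‖ ^ 2) ^ 2 := by
  set c : ℕ → ℂ := fun n => a (n + 1) * (s : ℂ) ^ (n + 1) with hc
  have hsn : ‖(s : ℂ)‖ < 1 := by simpa [abs_of_nonneg hs0] using hs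
  have hcs : Summable fun n => ‖c n‖ :=
    ((summable_nat_add_iff 1).2 (hf s hsn).summable).norm
  obtain ⟨h, hh⟩ : Summable fun n : ℕ =>
      c n • (fourier ((n : ℤ) + 1) : C(AddCircle (1 : ℝ), ℂ)) := by
    refine Summable.of_norm ?_
    simpa [norm_smul, fourier_norm] using hcs
  -- `h` is the boundary function `x ↦ f (s e^{2πix}) - a₀`.
  have hpt : ∀ x : AddCircle (1 : ℝ), h x = f (s * fourier 1 x) - a 0 := by
    intro x
    have hx1 : ‖(fourier 1 x : ℂ)‖ = 1 := Circle.norm_coe _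
    have hz : ‖(s : ℂ) * fourier 1 x‖ < 1 := by rw [norm_mul, hx1, mul_one]; exact hsn
    have h1 := (ContinuousMap.evalCLM ℂ x).hasSum hh
    have h2 := (hasSum_nat_add_iff' 1).2 (hf _ hz)
    simp only [Finset.sum_range_one, pow_zero, mul_one] at h2
    refine HasSum.unique h1 ((congrArg (HasSum · _) (funext fun n => ?_)).mpr h2)
    have hp : ∀ k : ℕ, (fourier (k : ℤ) x : ℂ) = (fourier 1 x) ^ k := by
      intro k
      induction k with
      | zero => simp
      | succ k ih => rw [Nat.cast_succ, fourier_add, ih, pow_succ]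
    have hp' := hp (n + 1)
    rw [Nat.cast_succ] at hp'
    change c n * fourier ((n : ℤ) + 1) x = _
    rw [hp', mul_pow, hc]
    ring
  have hbound : ∀ x : AddCircle (1 : ℝ),
      ‖h x‖ ≤ s * ‖((1 - ‖a 0‖ ^ 2 : ℝ) : ℂ) - conj (a 0) * h x‖ := by
    intro x
    have hx1 : ‖(fourier 1 x : ℂ)‖ = 1 := Circle.norm_coe _
    have hzn : ‖(s : ℂ) * fourier 1 x‖ = s := by
      rw [norm_mul, hx1, mul_one, Complex.norm_real, Real.norm_of_nonneg hs0]
    have h1 := schwarz_pick (differentiableOn_of_hasSum f a hf) hbd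
      (z := (s : ℂ) * fourier 1 x) (by rw [hzn]; exact hs)
    rw [hzn, hfa, ← hpt] at h1
    convert h1 using 3
    rw [hpt]
    have := Complex.conj_mul' (a 0)
    push_cast
    rw [← this]
    ring
  set L := ContinuousMap.toLp (E := ℂ) 2 (AddCircle.haarAddCircle (T := (1 : ℝ))) ℂ with hL
  have hH : HasSum (fun n : ℕ => c n • fourierLp (T := (1 : ℝ)) 2 ((n : ℤ) + 1)) (L h) := by
    simpa [fourierLp, Function.comp_def] using L.hasSum hh
  have hon := orthonormal_fourier (T := (1 : ℝ))
  have hinner : ∀ m : ℤ, HasSum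
      (fun n : ℕ => c n * (if m = (n : ℤ) + 1 then 1 else 0))
      (inner ℂ (fourierLp (T := (1 : ℝ)) 2 m) (L h)) := by
    intro m
    have := (innerSL ℂ (fourierLp (T := (1 : ℝ)) 2 m)).hasSum hH
    simpa [Function.comp_def, inner_smul_right, orthonormal_iff_ite.1 hon] using this
  have hin0 : inner ℂ (fourierLp (T := (1 : ℝ)) 2 0) (L h) = 0 := by
    refine (hinner 0).unique ?_
    convert hasSum_zero using 2 with n
    rw [if_neg (by lia), mul_zero]
  have hin : ∀ n : ℕ, inner ℂ (fourierLp (T := (1 : ℝ)) 2 ((n : ℤ) + 1)) (L h) = c n := by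
    intro n
    refine (hinner _).unique ?_
    convert hasSum_single n (fun k hk => ?_) using 1
    · simp
    · rw [if_neg (by omega), mul_zero]
  have hbessel : ∑ n ∈ Finset.range N, ‖c n‖ ^ 2 ≤ ‖L h‖ ^ 2 := by
    have hon' : Orthonormal ℂ (fun n : ℕ => fourierLp (T := (1 : ℝ)) 2 ((n : ℤ) + 1)) :=
      hon.comp (fun n : ℕ => (n : ℤ) + 1) (fun i j hij => by simpa using hij)
    simpa [hin] using hon'.sum_inner_products_le (L h) (s := Finset.range N)
  have hnorm : ‖L h‖ ≤ s * ‖((1 - ‖a 0‖ ^ 2 : ℝ) : ℂ) • fourierLp (T := (1 : ℝ)) 2 0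
      - conj (a 0) • L h‖ := by
    have e : ((1 - ‖a 0‖ ^ 2 : ℝ) : ℂ) • fourierLp (T := (1 : ℝ)) 2 0 - conj (a 0) • L h
        = L (((1 - ‖a 0‖ ^ 2 : ℝ) : ℂ) • fourier 0 - conj (a 0) • h) := by
      rw [map_sub, map_smul, map_smul]
    rw [e]
    refine Lp.norm_le_mul_norm_of_ae_le_mul ?_
    filter_upwards [ContinuousMap.coeFn_toLp (p := 2) (𝕜 := ℂ)
        (AddCircle.haarAddCircle (T := (1 : ℝ))) h,
      ContinuousMap.coeFn_toLp (p := 2) (𝕜 := ℂ) (AddCircle.haarAddCircle (T := (1 : ℝ)))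
        (((1 - ‖a 0‖ ^ 2 : ℝ) : ℂ) • fourier 0 - conj (a 0) • h)] with x hx1 hx2
    rw [hL, hx1, hx2]
    simpa using hbound x
  -- `L h` is orthogonal to the constant function `fourierLp 2 0`, so the cross term vanishes.
  have hpyth : ‖((1 - ‖a 0‖ ^ 2 : ℝ) : ℂ) • fourierLp (T := (1 : ℝ)) 2 0 - conj (a 0) • L h‖ ^ 2
      = (1 - ‖a 0‖ ^ 2) ^ 2 + ‖a 0‖ ^ 2 * ‖L h‖ ^ 2 := by
    rw [@norm_sub_sq ℂ, inner_smul_left, inner_smul_right, hin0, norm_smul, norm_smul,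
      hon.1 0, RCLike.norm_conj, Complex.norm_real, mul_one, mul_pow, Real.norm_eq_abs, sq_abs]
    simp
  have hsq : ‖L h‖ ^ 2 ≤ s ^ 2 * ((1 - ‖a 0‖ ^ 2) ^ 2 + ‖a 0‖ ^ 2 * ‖L h‖ ^ 2) := by
    rw [← hpyth, ← mul_pow]
    exact pow_le_pow_left₀ (norm_nonneg _) hnorm 2
  have hsum : ∑ n ∈ Finset.range N, ‖a (n + 1)‖ ^ 2 * (s ^ 2) ^ (n + 1)
      = ∑ n ∈ Finset.range N, ‖c n‖ ^ 2 := by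
    refine Finset.sum_congr rfl fun n _ => ?_
    rw [hc, norm_mul, norm_pow, Complex.norm_real, Real.norm_of_nonneg hs0]
    ring
  rw [hsum]
  have hpos : 0 ≤ 1 - s ^ 2 * ‖a 0‖ ^ 2 := by
    have h1 : s * ‖a 0‖ ≤ 1 := mul_le_one₀ hs.le (norm_nonneg _) ha
    have h2 : 0 ≤ s * ‖a 0‖ := by positivity
    nlinarith
  calc _ ≤ ‖L h‖ ^ 2 * (1 - s ^ 2 * ‖a 0‖ ^ 2) := mul_le_mul_of_nonneg_right hbessel hpos
    _ ≤ _ := by linarith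

/-- The weighted `ℓ²` bound, with the endpoint `ρ = 1` included by continuity in `ρ`. -/
lemma weighted_sq_sum_le (f : ℂ → ℂ) (a : ℕ → ℂ)
    (hf : ∀ z : ℂ, ‖z‖ < 1 → HasSum (fun n => a n * z ^ n) (f z))
    (hbd : ∀ z : ℂ, ‖z‖ < 1 → ‖f z‖ ≤ 1) (ha : ‖a 0‖ ≤ 1) (hfa : f 0 = a 0)
    {ρ : ℝ} (h0 : 0 ≤ ρ) (h1 : ρ ≤ 1) (N : ℕ) :
    (∑ n ∈ Finset.range N, ‖a (n + 1)‖ ^ 2 * ρ ^ (n + 1)) * (1 - ρ * ‖a 0‖ ^ 2)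
      ≤ ρ * (1 - ‖a 0‖ ^ 2) ^ 2 := by
  have h : ∀ t ∈ Set.Ico (0 : ℝ) 1,
      (∑ n ∈ Finset.range N, ‖a (n + 1)‖ ^ 2 * t ^ (n + 1)) * (1 - t * ‖a 0‖ ^ 2)
        ≤ t * (1 - ‖a 0‖ ^ 2) ^ 2 := by
    intro t ht
    have := weighted_sq_sum_le_of_lt f a hf hbd ha hfa (Real.sqrt_nonneg t)
      ((Real.sqrt_lt' one_pos).2 (by simpa using ht.2)) N
    rwa [Real.sq_sqrt ht.1] at this
  have hmem : ρ ∈ closure (Set.Ico (0 : ℝ) 1) := by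
    rw [closure_Ico zero_ne_one]; exact ⟨h0, h1⟩
  exact closure_minimal (s := Set.Ico (0 : ℝ) 1)
    (t := {t : ℝ | (∑ n ∈ Finset.range N, ‖a (n + 1)‖ ^ 2 * t ^ (n + 1)) * (1 - t * ‖a 0‖ ^ 2)
        ≤ t * (1 - ‖a 0‖ ^ 2) ^ 2}) (fun t ht => by rw [Set.mem_ofPred_eq]; exact h t ht)
    (isClosed_le (by fun_prop) (by fun_prop)) hmem

/-- Cauchy–Schwarz with geometric weights `ρⁿ` and `qⁿ`, where `ρ * q = r ^ 2`. -/
lemma sq_sum_le (b : ℕ → ℝ) {ρ q r : ℝ} (hρ : 0 ≤ ρ) (hq0 : 0 ≤ q) (hq : q < 1)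
    (hr : ρ * q = r ^ 2) (N : ℕ) :
    (∑ n ∈ Finset.range N, b n * r ^ (n + 1)) ^ 2
      ≤ (∑ n ∈ Finset.range N, b n ^ 2 * ρ ^ (n + 1)) * (q / (1 - q)) := by
  have h1 : (∑ n ∈ Finset.range N, b n * r ^ (n + 1)) ^ 2
      ≤ (∑ n ∈ Finset.range N, b n ^ 2 * ρ ^ (n + 1)) * ∑ n ∈ Finset.range N, q ^ (n + 1) := by
    refine Finset.sum_sq_le_sum_mul_sum_of_sq_le_mul _ (fun n _ => by positivity)
      (fun n _ => by positivity) (fun n _ => le_of_eq ?_)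
    rw [mul_pow, mul_assoc, ← mul_pow ρ q, hr, ← pow_mul, ← pow_mul, mul_comm 2]
  have h2 : ∑ n ∈ Finset.range N, q ^ (n + 1) ≤ q / (1 - q) := by
    have h3 := (hasSum_geometric_of_lt_one hq0 hq).mul_left q
    rw [← div_eq_mul_inv] at h3
    simpa [pow_succ'] using sum_le_hasSum (Finset.range N) (fun n _ => by positivity) h3
  exact h1.trans (mul_le_mul_of_nonneg_left h2 (Finset.sum_nonneg fun n _ => by positivity))

/-- Tail coefficient sum bounds for bounded analytic functions. -/
theorem tail_sum_bounds (f : ℂ → ℂ) (a : ℕ → ℂ)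
    (hf : ∀ z : ℂ, ‖z‖ < 1 → HasSum (fun n => a n * z ^ n) (f z))
    (hbd : ∀ z : ℂ, ‖z‖ < 1 → ‖f z‖ ≤ 1)
    (r : ℝ) (hr0 : 0 ≤ r) (hr : r < 1) :
    (r ≤ ‖a 0‖ →
      ∑' n : ℕ, ‖a (n + 1)‖ * r ^ (n + 1) ≤ r * (1 - ‖a 0‖ ^ 2) / (1 - r * ‖a 0‖)) ∧
    (‖a 0‖ < r →
      ∑' n : ℕ, ‖a (n + 1)‖ * r ^ (n + 1) ≤
        r * Real.sqrt (1 - ‖a 0‖ ^ 2) / Real.sqrt (1 - r ^ 2)) := by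
  have hfa : f 0 = a 0 := by
    refine (hf 0 (by simp)).unique ?_
    convert hasSum_single 0 (fun k hk => ?_) using 1
    · simp
    · simp [hk]
  have ha : ‖a 0‖ ≤ 1 := hfa ▸ hbd 0 (by simp)
  have key := fun (ρ : ℝ) (h0 : 0 ≤ ρ) (h1 : ρ ≤ 1) (N : ℕ) =>
    weighted_sq_sum_le f a hf hbd ha hfa h0 h1 N
  have hA := norm_nonneg (a 0)
  set A := ‖a 0‖
  have hA2 : 0 ≤ 1 - A ^ 2 := by nlinarith
  constructor
  · intro hrA
    have hrA1 : 0 < 1 - r * A := by nlinarith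
    rcases hr0.eq_or_lt with rfl | hrpos
    · simp
    have hApos : 0 < A := hrpos.trans_le hrA
    refine Real.tsum_le_of_sum_range_le (fun n => by positivity) fun N => ?_
    refine le_of_sq_le_sq ?_ (by positivity)
    have hk := key (r / A) (by positivity) ((div_le_one hApos).2 hrA) N
    have e : r / A * A ^ 2 = r * A := by field_simp
    rw [e, ← le_div_iff₀ hrA1] at hk
    refine (sq_sum_le (fun n => ‖a (n + 1)‖) (ρ := r / A) (q := r * A) (by positivity)
      (by positivity) (by linarith) (by field_simp) N).trans ?_
    refine (mul_le_mul_of_nonneg_right hk (by positivity)).trans_eq ?_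
    field_simp
  · intro hAr
    have hr2 : 0 < 1 - r ^ 2 := by nlinarith
    have hA2' : 0 < 1 - A ^ 2 := by nlinarith
    refine Real.tsum_le_of_sum_range_le (fun n => by positivity) fun N => ?_
    refine le_of_sq_le_sq ?_ (by positivity)
    have hk := key 1 zero_le_one le_rfl N
    rw [one_mul, one_mul, sq (1 - A ^ 2)] at hk
    replace hk := le_of_mul_le_mul_right hk hA2'
    refine (sq_sum_le (fun n => ‖a (n + 1)‖) (ρ := 1) (q := r ^ 2) zero_le_one
      (by positivity) (by linarith) (one_mul _) N).trans ?_
    refine (mul_le_mul_of_nonneg_right hk (by positivity)).trans_eq ?_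
    rw [div_pow, mul_pow, Real.sq_sqrt hA2, Real.sq_sqrt hr2.le]
    ring
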